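/- Let 0 < a ≤ 1/√2 and 0 < y ≤ 1, and let T = (T₁,T₂) be the 2-variable weighted shift of Figure 2. Then T is subnormal if and only if y ≤ √(1/(2−a²)). -/

import Mathlib

open ContinuousLinearMap

noncomputable section

/-- The Hilbert space `ℓ²(ℤ₊²)`. -/
abbrev ℓ2 : Type := lp (fun _ : ℕ × ℕ => ℂ) 2

/-- The canonical orthonormal basis vector `e_k` of `ℓ²(ℤ₊²)`. -/
def e (k : ℕ × ℕ) : ℓ2 := lp.single 2 k 1

/-- The weight sequence `x₀ = y√(3/4)`, `xₙ = √((n+1)(n+3))/(n+2)` for `n ≥ 1`. -/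
def xseq (y : ℝ) : ℕ → ℝ
  | 0 => y * Real.sqrt (3 / 4)
  | n + 1 => Real.sqrt (((n : ℝ) + 2) * ((n : ℝ) + 4)) / ((n : ℝ) + 3)

/-- The horizontal weights of the 2-variable weighted shift of Figure 2:
`α_{(n,0)} = xₙ`, `α_{(0,j)} = a` and `α_{(n,j)} = 1` for `n, j ≥ 1`. -/
def alphaF (a y : ℝ) : ℕ × ℕ → ℝ
  | (n, 0) => xseq y n
  | (0, _ + 1) => a
  | (_ + 1, _ + 1) => 1

/-- The vertical weights of the 2-variable weighted shift of Figure 2: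
`β_{(0,0)} = y`, `β_{(n,0)} = a y/(x₀⋯x_{n−1})` for `n ≥ 1`, and `β_{(n,j)} = 1` for `j ≥ 1`. -/
def betaF (a y : ℝ) : ℕ × ℕ → ℝ
  | (0, 0) => y
  | (n + 1, 0) => a * y / ∏ i ∈ Finset.range (n + 1), xseq y i
  | (_, _ + 1) => 1

/-- A (commuting) pair of bounded operators on a complex Hilbert space `H` is *subnormal*
if there are a complex Hilbert space `K`, a linear isometry `V : H → K`, and a commuting
pair `N = (N₁, N₂)` of normal bounded operators on `K` with `Nᵢ V = V Tᵢ`. -/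
def SubnormalPair (T₁ T₂ : ℓ2 →L[ℂ] ℓ2) : Prop :=
  ∃ (K : Type) (_ : NormedAddCommGroup K) (_ : InnerProductSpace ℂ K) (_ : CompleteSpace K)
    (N₁ N₂ : K →L[ℂ] K) (V : ℓ2 →ₗᵢ[ℂ] K),
    (N₁ ∘L N₂ = N₂ ∘L N₁) ∧
    (adjoint N₁ ∘L N₁ = N₁ ∘L adjoint N₁) ∧
    (adjoint N₂ ∘L N₂ = N₂ ∘L adjoint N₂) ∧
    (∀ x, N₁ (V x) = V (T₁ x)) ∧ (∀ x, N₂ (V x) = V (T₂ x))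

open MeasureTheory in
/-- The integral of a Fourier monomial on the circle. -/
lemma integral_circle (m n : ℕ) :
    ∫ w : UnitAddCircle, (starRingEnd ℂ) ((fourier 1 w) ^ m) * (fourier 1 w) ^ n
      ∂AddCircle.haarAddCircle = if m = n then 1 else 0 := by
  have hp : ∀ (k : ℕ) (w : UnitAddCircle), (fourier 1 w : ℂ) ^ k = fourier (k : ℤ) w := by
    intro k w
    induction k with
    | zero => simp
    | succ k ih => rw [pow_succ, ih, Nat.cast_succ, fourier_add]
  have h := orthonormal_iff_ite.mp (orthonormal_fourier (T := (1 : ℝ))) m n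
  rw [ContinuousMap.inner_toLp] at h
  simp only [hp]
  simp only [Nat.cast_inj] at h
  rw [← h]
  congr 1
  ext w
  ring

open scoped ComplexOrder in
open MeasureTheory in
/-- The positive functional on continuous functions given by a finite measure. -/
def posInt {X : Type} [TopologicalSpace X] [CompactSpace X] [MeasurableSpace X] [BorelSpace X]
    (μ : Measure X) [IsFiniteMeasure μ] : C(X, ℂ) →ₚ[ℂ] ℂ :=
  PositiveLinearMap.mk₀
    { toFun := fun f => ∫ x, f x ∂μ
      map_add' := fun f g => by
        have hi : ∀ f : C(X, ℂ), Integrable (fun x => f x) μ := fun f =>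
          (BoundedContinuousFunction.integrable μ (BoundedContinuousFunction.mkOfCompact f))
        simpa using integral_add (hi f) (hi g)
      map_smul' := fun c f => by
        simpa using integral_const_mul c (fun x => f x) }
    (by
      intro f hf
      exact integral_nonneg fun x => hf x)

abbrev XX : Type := UnitAddCircle × (UnitAddCircle × (unitInterval × unitInterval))

def zz1 : C(XX, ℂ) :=
  ⟨fun p => fourier 1 p.1 * ((p.2.2.1 : ℝ) : ℂ), by fun_prop⟩

def zz2 : C(XX, ℂ) :=
  ⟨fun p => fourier 1 p.2.1 * ((p.2.2.2 : ℝ) : ℂ), by fun_prop⟩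

open MeasureTheory in
def bigM (ν : Measure (unitInterval × unitInterval)) : Measure XX :=
  (AddCircle.haarAddCircle).prod ((AddCircle.haarAddCircle).prod ν)

open MeasureTheory in
instance (ν : Measure (unitInterval × unitInterval)) [IsFiniteMeasure ν] :
    IsFiniteMeasure (bigM ν) := by unfold bigM; infer_instance

open MeasureTheory in
lemma integral_zz (ν : Measure (unitInterval × unitInterval)) [IsFiniteMeasure ν]
    (k l : ℕ × ℕ) :
    ∫ x, (star (zz1 ^ k.1 * zz2 ^ k.2) * (zz1 ^ l.1 * zz2 ^ l.2)) x ∂(bigM ν) =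
      if k = l then
        ((∫ p : unitInterval × unitInterval, (p.1 : ℝ) ^ (2 * k.1) * (p.2 : ℝ) ^ (2 * k.2) ∂ν : ℝ)
          : ℂ)
      else 0 := by
  have h1 : ∀ x : XX, (star (zz1 ^ k.1 * zz2 ^ k.2) * (zz1 ^ l.1 * zz2 ^ l.2)) x =
      ((starRingEnd ℂ) ((fourier 1 x.1) ^ k.1) * (fourier 1 x.1) ^ l.1) *
      (((starRingEnd ℂ) ((fourier 1 x.2.1) ^ k.2) * (fourier 1 x.2.1) ^ l.2) *
      (((x.2.2.1 : ℝ) ^ (k.1 + l.1) * (x.2.2.2 : ℝ) ^ (k.2 + l.2) : ℝ) : ℂ)) := by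
    intro x
    simp [zz1, zz2, mul_pow]
    ring
  simp_rw [h1]
  unfold bigM
  rw [integral_prod_mul (μ := AddCircle.haarAddCircle)
    (f := fun w : UnitAddCircle => (starRingEnd ℂ) ((fourier 1 w) ^ k.1) * (fourier 1 w) ^ l.1)
    (g := fun q : UnitAddCircle × (unitInterval × unitInterval) =>
      (((starRingEnd ℂ) ((fourier 1 q.1) ^ k.2) * (fourier 1 q.1) ^ l.2) *
      (((q.2.1 : ℝ) ^ (k.1 + l.1) * (q.2.2 : ℝ) ^ (k.2 + l.2) : ℝ) : ℂ)))]
  rw [integral_prod_mul (μ := AddCircle.haarAddCircle)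
    (f := fun w : UnitAddCircle => (starRingEnd ℂ) ((fourier 1 w) ^ k.2) * (fourier 1 w) ^ l.2)
    (g := fun q : unitInterval × unitInterval =>
      (((q.1 : ℝ) ^ (k.1 + l.1) * (q.2 : ℝ) ^ (k.2 + l.2) : ℝ) : ℂ))]
  rw [integral_circle, integral_circle]
  by_cases hkl : k = l
  · subst hkl
    simp only [if_true, one_mul]
    rw [integral_complex_ofReal]
    simp only [two_mul]
  · rw [if_neg hkl]
    by_cases h : k.1 = l.1
    · have : k.2 ≠ l.2 := fun h' => hkl (Prod.ext h h')
      simp [this]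
    · simp [h]

lemma subnormal_of_rep {A : Type} [CommCStarAlgebra A] {K : Type} [NormedAddCommGroup K]
    [InnerProductSpace ℂ K] [CompleteSpace K] (π : A →⋆ₐ[ℂ] (K →L[ℂ] K)) (z1 z2 : A)
    (v : ℕ × ℕ → K) (hv : Orthonormal ℂ v) (α β : ℕ × ℕ → ℝ)
    (hN1 : ∀ k, π z1 (v k) = (α k : ℂ) • v (k.1 + 1, k.2))
    (hN2 : ∀ k, π z2 (v k) = (β k : ℂ) • v (k.1, k.2 + 1))
    (T₁ T₂ : ℓ2 →L[ℂ] ℓ2)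
    (hT₁ : ∀ k : ℕ × ℕ, T₁ (e k) = ((α k : ℂ)) • e (k.1 + 1, k.2))
    (hT₂ : ∀ k : ℕ × ℕ, T₂ (e k) = ((β k : ℂ)) • e (k.1, k.2 + 1)) :
    SubnormalPair T₁ T₂ := by
  obtain ⟨V, hV⟩ : ∃ V : ℓ2 →ₗᵢ[ℂ] K, ∀ k, V (e k) = v k := by
    refine ⟨hv.orthogonalFamily.linearIsometry, fun k => ?_⟩
    unfold e
    rw [OrthogonalFamily.linearIsometry_apply_single]
    simp
  have hext : ∀ A B : ℓ2 →L[ℂ] K, (∀ k, A (e k) = B (e k)) → ∀ x, A x = B x := by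
    intro A B h x
    have : A = B := by
      refine lp.ext_continuousLinearMap (by simp) fun k => ?_
      ext
      simpa [e] using h k
    rw [this]
  refine ⟨K, inferInstance, inferInstance, inferInstance, π z1, π z2, V, ?_, ?_, ?_, ?_, ?_⟩
  · change π z1 * π z2 = π z2 * π z1
    rw [← map_mul, ← map_mul, mul_comm]
  · change star (π z1) * π z1 = π z1 * star (π z1)
    rw [← map_star, ← map_mul, ← map_mul, mul_comm]
  · change star (π z2) * π z2 = π z2 * star (π z2)
    rw [← map_star, ← map_mul, ← map_mul, mul_comm]
  · refine hext (π z1 ∘L V.toContinuousLinearMap) (V.toContinuousLinearMap ∘L T₁) fun k => ?_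
    change π z1 (V (e k)) = V (T₁ (e k))
    rw [hV, hT₁, map_smul, hV, hN1]
  · refine hext (π z2 ∘L V.toContinuousLinearMap) (V.toContinuousLinearMap ∘L T₂) fun k => ?_
    change π z2 (V (e k)) = V (T₂ (e k))
    rw [hV, hT₂, map_smul, hV, hN2]

open scoped ComplexOrder in
open MeasureTheory in
lemma subnormal_of_moments (g : ℕ × ℕ → ℝ) (hg : ∀ k, 0 < g k) (α β : ℕ × ℕ → ℝ)
    (hα : ∀ k, g (k.1 + 1, k.2) = α k * g k) (hβ : ∀ k, g (k.1, k.2 + 1) = β k * g k)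
    (ν : Measure (unitInterval × unitInterval)) [IsFiniteMeasure ν]
    (hν : ∀ k : ℕ × ℕ, ∫ p : unitInterval × unitInterval,
      (p.1 : ℝ) ^ (2 * k.1) * (p.2 : ℝ) ^ (2 * k.2) ∂ν = g k ^ 2)
    (T₁ T₂ : ℓ2 →L[ℂ] ℓ2)
    (hT₁ : ∀ k : ℕ × ℕ, T₁ (e k) = ((α k : ℂ)) • e (k.1 + 1, k.2))
    (hT₂ : ∀ k : ℕ × ℕ, T₂ (e k) = ((β k : ℂ)) • e (k.1, k.2 + 1)) :
    SubnormalPair T₁ T₂ := by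
  let f := posInt (bigM ν)
  let w : ℕ × ℕ → C(XX, ℂ) := fun k => zz1 ^ k.1 * zz2 ^ k.2
  let v : ℕ × ℕ → f.GNS := fun k => (f.toPreGNS (((g k : ℂ))⁻¹ • w k) : f.PreGNS)
  have hgc : ∀ k, (g k : ℂ) ≠ 0 := fun k => by exact_mod_cast (hg k).ne'
  have hv : Orthonormal ℂ v := by
    rw [orthonormal_iff_ite]
    intro k l
    simp only [v]
    rw [UniformSpace.Completion.inner_coe, PositiveLinearMap.preGNS_inner_def]
    simp only [PositiveLinearMap.ofPreGNS_toPreGNS, star_smul, smul_mul_assoc, mul_smul_comm,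
      map_smul]
    have h2 : f (star (w k) * w l) = _ := integral_zz ν k l
    rw [h2]
    by_cases hkl : k = l
    · subst hkl
      rw [if_pos rfl, if_pos rfl, hν]
      have := hgc k
      simp
      field_simp
    · simp [hkl]
  have hN1 : ∀ k, f.gnsStarAlgHom zz1 (v k) = (α k : ℂ) • v (k.1 + 1, k.2) := by
    intro k
    simp only [v]
    change f.gnsNonUnitalStarAlgHom zz1 _ = _
    rw [PositiveLinearMap.gnsNonUnitalStarAlgHom_apply_coe,
      ← UniformSpace.Completion.coe_smul]
    congr 1
    rw [PositiveLinearMap.leftMulMapPreGNS_apply, ← map_smul]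
    have h3 : (α k : ℂ) = g (k.1 + 1, k.2) / g k := by
      rw [hα]; have := hgc k; push_cast; field_simp
    have h4 : zz1 * w k = w (k.1 + 1, k.2) := by simp only [w]; ring
    have := hgc k
    have := hgc (k.1 + 1, k.2)
    rw [h3, smul_smul, ← h4]
    simp only [PositiveLinearMap.ofPreGNS_toPreGNS, mul_smul_comm, map_smul]
    congr 1
    field_simp
  have hN2 : ∀ k, f.gnsStarAlgHom zz2 (v k) = (β k : ℂ) • v (k.1, k.2 + 1) := by
    intro k
    simp only [v]
    change f.gnsNonUnitalStarAlgHom zz2 _ = _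
    rw [PositiveLinearMap.gnsNonUnitalStarAlgHom_apply_coe,
      ← UniformSpace.Completion.coe_smul]
    congr 1
    rw [PositiveLinearMap.leftMulMapPreGNS_apply, ← map_smul]
    have h3 : (β k : ℂ) = g (k.1, k.2 + 1) / g k := by
      rw [hβ]; have := hgc k; push_cast; field_simp
    have h4 : zz2 * w k = w (k.1, k.2 + 1) := by simp only [w]; ring
    have := hgc k
    have := hgc (k.1, k.2 + 1)
    rw [h3, smul_smul, ← h4]
    simp only [PositiveLinearMap.ofPreGNS_toPreGNS, mul_smul_comm, map_smul]
    congr 1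
    field_simp
  exact subnormal_of_rep f.gnsStarAlgHom zz1 zz2 v hv α β hN1 hN2 T₁ T₂ hT₁ hT₂

/-- Square roots of the moments. -/
def gF (a y : ℝ) : ℕ × ℕ → ℝ
  | (n, 0) => ∏ i ∈ Finset.range n, xseq y i
  | (0, _ + 1) => y
  | (_ + 1, _ + 1) => a * y

lemma xseq_pos {y : ℝ} (hy : 0 < y) (n : ℕ) : 0 < xseq y n := by
  cases n with
  | zero => simp only [xseq]; positivity
  | succ n => simp only [xseq]; positivity

lemma gF_pos {a y : ℝ} (ha : 0 < a) (hy : 0 < y) (k : ℕ × ℕ) : 0 < gF a y k := by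
  obtain ⟨n, j⟩ := k
  cases j with
  | zero => simp only [gF]; exact Finset.prod_pos fun i _ => xseq_pos hy i
  | succ j =>
    cases n with
    | zero => exact hy
    | succ n => exact mul_pos ha hy

lemma gF_alpha (a y : ℝ) (k : ℕ × ℕ) : gF a y (k.1 + 1, k.2) = alphaF a y k * gF a y k := by
  obtain ⟨n, j⟩ := k
  cases j with
  | zero => simp only [gF, alphaF, Finset.prod_range_succ]; ring
  | succ j =>
    cases n with
    | zero => simp only [gF, alphaF]
    | succ n => simp only [gF, alphaF]; ring

lemma gF_beta {a y : ℝ} (hy : 0 < y) (k : ℕ × ℕ) :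
    gF a y (k.1, k.2 + 1) = betaF a y k * gF a y k := by
  obtain ⟨n, j⟩ := k
  cases j with
  | zero =>
    cases n with
    | zero => simp [gF, betaF]
    | succ n =>
      have : ∏ i ∈ Finset.range (n + 1), xseq y i ≠ 0 :=
        (Finset.prod_pos fun i _ => xseq_pos hy i).ne'
      simp only [gF, betaF]
      field_simp
  | succ j =>
    cases n with
    | zero => simp only [gF, betaF]; ring
    | succ n => simp only [gF, betaF]; ring

lemma gF_zero_sq (a y : ℝ) (n : ℕ) :
    gF a y (n + 1, 0) ^ 2 = y ^ 2 * (1 / 2 + 1 / 2 * (1 / ((n : ℝ) + 2))) := by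
  simp only [gF]
  induction n with
  | zero =>
    simp only [zero_add, Finset.prod_range_one, xseq, mul_pow]
    rw [Real.sq_sqrt (by norm_num)]
    norm_num
  | succ n ih =>
    rw [Finset.prod_range_succ, mul_pow, ih]
    simp only [xseq, div_pow]
    rw [Real.sq_sqrt (by positivity)]
    push_cast
    field_simp
    ring

/-- The map `s ↦ (√s, 0)`. -/
def sqMap (s : unitInterval) : unitInterval × unitInterval :=
  (⟨Real.sqrt s, Real.sqrt_nonneg _, Real.sqrt_le_one.mpr s.2.2⟩, 0)

lemma sqMap_cont : Continuous sqMap := by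
  unfold sqMap
  fun_prop

open MeasureTheory in
lemma integral_unit (n : ℕ) : ∫ s : unitInterval, (s : ℝ) ^ n = 1 / ((n : ℝ) + 1) := by
  have h := MeasureTheory.integral_subtype_comap (μ := volume)
    (measurableSet_Icc (a := (0 : ℝ)) (b := 1)) (fun s : ℝ => s ^ n)
  change ∫ s : unitInterval, (s : ℝ) ^ n = _ at h
  rw [h, integral_Icc_eq_integral_Ioc, ← intervalIntegral.integral_of_le zero_le_one, integral_pow]
  simp

open MeasureTheory in
/-- The Berger measure. -/
def nuM (a y : ℝ) : Measure (unitInterval × unitInterval) :=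
  ENNReal.ofReal (y ^ 2 * (1 - a ^ 2)) • Measure.dirac (0, 1) +
  (ENNReal.ofReal (y ^ 2 * a ^ 2) • Measure.dirac (1, 1) +
  (ENNReal.ofReal (y ^ 2 * (1 / 2 - a ^ 2)) • Measure.dirac (1, 0) +
  (ENNReal.ofReal (1 - y ^ 2 * (2 - a ^ 2)) • Measure.dirac (0, 0) +
  ENNReal.ofReal (y ^ 2 / 2) • Measure.map sqMap volume)))

open MeasureTheory in
instance (a y : ℝ) : IsFiniteMeasure (nuM a y) := by
  have h : ∀ (r : ℝ) (μ : Measure (unitInterval × unitInterval)) [IsFiniteMeasure μ],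
    IsFiniteMeasure (ENNReal.ofReal r • μ) := fun r μ _ => μ.smul_finite ENNReal.ofReal_ne_top
  have := h (y ^ 2 * (1 - a ^ 2)) (Measure.dirac (0, 1))
  have := h (y ^ 2 * a ^ 2) (Measure.dirac (1, 1))
  have := h (y ^ 2 * (1 / 2 - a ^ 2)) (Measure.dirac (1, 0))
  have := h (1 - y ^ 2 * (2 - a ^ 2)) (Measure.dirac (0, 0))
  have := h (y ^ 2 / 2) (Measure.map sqMap volume)
  unfold nuM
  infer_instance

open MeasureTheory in
lemma nuM_moment (a y : ℝ) (ha : a ^ 2 ≤ 1 / 2) (hc : 0 ≤ 1 - y ^ 2 * (2 - a ^ 2))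
    (k : ℕ × ℕ) : ∫ p : unitInterval × unitInterval,
      (p.1 : ℝ) ^ (2 * k.1) * (p.2 : ℝ) ^ (2 * k.2) ∂(nuM a y) = gF a y k ^ 2 := by
  have hfc : Continuous fun p : unitInterval × unitInterval =>
    (p.1 : ℝ) ^ (2 * k.1) * (p.2 : ℝ) ^ (2 * k.2) := by fun_prop
  have hi : ∀ (μ : Measure (unitInterval × unitInterval)) [IsFiniteMeasure μ],
      Integrable (fun p : unitInterval × unitInterval =>
        (p.1 : ℝ) ^ (2 * k.1) * (p.2 : ℝ) ^ (2 * k.2)) μ := fun μ _ =>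
    BoundedContinuousFunction.integrable μ (BoundedContinuousFunction.mkOfCompact ⟨_, hfc⟩)
  have hi' : ∀ (r : ℝ) (μ : Measure (unitInterval × unitInterval)) [IsFiniteMeasure μ],
      Integrable (fun p : unitInterval × unitInterval =>
        (p.1 : ℝ) ^ (2 * k.1) * (p.2 : ℝ) ^ (2 * k.2)) (ENNReal.ofReal r • μ) := fun r μ _ =>
    (hi μ).smul_measure ENNReal.ofReal_ne_top
  have i1 := hi' (y ^ 2 * (1 - a ^ 2)) (Measure.dirac (0, 1))
  have i2 := hi' (y ^ 2 * a ^ 2) (Measure.dirac (1, 1))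
  have i3 := hi' (y ^ 2 * (1 / 2 - a ^ 2)) (Measure.dirac (1, 0))
  have i4 := hi' (1 - y ^ 2 * (2 - a ^ 2)) (Measure.dirac (0, 0))
  have i5 := hi' (y ^ 2 / 2) (Measure.map sqMap volume)
  have n1 : 0 ≤ y ^ 2 * (1 - a ^ 2) := mul_nonneg (sq_nonneg _) (by linarith)
  have n2 : 0 ≤ y ^ 2 * a ^ 2 := by positivity
  have n3 : 0 ≤ y ^ 2 * (1 / 2 - a ^ 2) := mul_nonneg (sq_nonneg _) (by linarith)
  have n5 : 0 ≤ y ^ 2 / 2 := by positivity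
  unfold nuM
  rw [integral_add_measure i1 (i2.add_measure (i3.add_measure (i4.add_measure i5))),
    integral_add_measure i2 (i3.add_measure (i4.add_measure i5)),
    integral_add_measure i3 (i4.add_measure i5), integral_add_measure i4 i5]
  simp only [integral_smul_measure, integral_dirac, ENNReal.toReal_ofReal, n1, n2, n3, hc, n5]
  rw [integral_map sqMap_cont.measurable.aemeasurable hfc.aestronglyMeasurable]
  have hs : ∀ s : unitInterval, ((sqMap s).1 : ℝ) ^ (2 * k.1) * ((sqMap s).2 : ℝ) ^ (2 * k.2)
      = (s : ℝ) ^ k.1 * (0 : ℝ) ^ (2 * k.2) := by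
    intro s
    simp only [sqMap]
    rw [pow_mul, Real.sq_sqrt s.2.1]
    simp
  simp_rw [hs]
  rw [integral_mul_const, integral_unit]
  obtain ⟨n, j⟩ := k
  cases j with
  | zero =>
    cases n with
    | zero => simp [gF]; ring
    | succ n =>
      rw [gF_zero_sq]
      simp
      field_simp
      ring
  | succ j =>
    cases n with
    | zero => simp [gF]; ring
    | succ n => simp [gF]; ring

lemma alt_sum_inv (M : ℕ) : ∑ i ∈ Finset.range (M + 1),
    (-1 : ℝ) ^ i * (M.choose i) * (1 / ((i : ℝ) + 1)) = 1 / ((M : ℝ) + 1) := by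
  have h : ∀ i ∈ Finset.range (M + 1), (-1 : ℝ) ^ i * (M.choose i) * (1 / ((i : ℝ) + 1)) =
      - (1 / ((M : ℝ) + 1)) * ((-1 : ℝ) ^ (i + 1) * ((M + 1).choose (i + 1))) := by
    intro i _
    have h1 : ((M : ℝ) + 1) * (M.choose i) = ((M + 1).choose (i + 1)) * ((i : ℝ) + 1) := by
      exact_mod_cast Nat.add_one_mul_choose_eq M i
    have h2 : ((M.choose i : ℕ) : ℝ) = ((M + 1).choose (i + 1)) * ((i : ℝ) + 1) / ((M : ℝ) + 1) := by
      rw [← h1]; field_simp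
    rw [h2, pow_succ]
    field_simp
    try ring
  rw [Finset.sum_congr rfl h, ← Finset.mul_sum]
  have h3 : ∑ i ∈ Finset.range (M + 1 + 1), (-1 : ℝ) ^ i * ((M + 1).choose i) = 0 := by
    exact_mod_cast Int.alternating_sum_range_choose_of_ne (n := M + 1) (by omega)
  rw [Finset.sum_range_succ'] at h3
  simp only [pow_zero, Nat.choose_zero_right, Nat.cast_one, mul_one] at h3
  rw [eq_neg_of_add_eq_zero_left h3]
  ring

lemma alt_sum_choose {M : ℕ} (hM : M ≠ 0) :
    ∑ i ∈ Finset.range (M + 1), (-1 : ℝ) ^ i * (M.choose i) = 0 := by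
  exact_mod_cast Int.alternating_sum_range_choose_of_ne hM

lemma alt_sum_nonneg {K : Type} [NormedAddCommGroup K] [InnerProductSpace ℂ K] [CompleteSpace K]
    (N₁ N₂ : K →L[ℂ] K) (h12 : N₁ * N₂ = N₂ * N₁) (h1 : star N₁ * N₁ = N₁ * star N₁)
    (h2 : star N₂ * N₂ = N₂ * star N₂) (v : K) (m : ℕ) :
    0 ≤ ∑ i ∈ Finset.range (2 * m + 1), (-1 : ℝ) ^ i * ((2 * m).choose i) *
      (‖(N₁ ^ i) v‖ ^ 2 - 2 * ‖(N₁ ^ i) (N₂ v)‖ ^ 2 + ‖(N₁ ^ i) (N₂ (N₂ v))‖ ^ 2) := by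
  have i1 : IsStarNormal N₁ := ⟨h1⟩
  have i2 : IsStarNormal N₂ := ⟨h2⟩
  have c12 : Commute N₁ N₂ := h12
  have c11 : Commute (star N₁) N₁ := h1
  have c22 : Commute (star N₂) N₂ := h2
  have s12 : Commute N₁ (star N₂) := i2.commute_star_right c12
  have s21 : Commute (star N₁) N₂ := i1.commute_star_left c12
  have ss : Commute (star N₁) (star N₂) := c12.star_star
  let A := star N₁ * N₁
  let B := star N₂ * N₂
  have cAB : Commute A B := ((ss.mul_left s12).mul_right (s21.mul_left c12))
  have sA : star A = A := by simp [A]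
  have sB : star B = B := by simp [B]
  let φ : (K →L[ℂ] K) →ₗ[ℝ] ℝ :=
    { toFun := fun X => (inner ℂ v (X v)).re
      map_add' := fun X Y => by simp [inner_add_right]
      map_smul' := fun r X => by
        simp [← Complex.coe_smul, inner_smul_right] }
  have hφ : ∀ Y, φ (star Y * Y) = ‖Y v‖ ^ 2 := by
    intro Y
    change (inner ℂ v ((adjoint Y) (Y v))).re = _
    rw [ContinuousLinearMap.adjoint_inner_right]
    exact inner_self_eq_norm_sq (𝕜 := ℂ) (Y v)
  have hA : ∀ i, A ^ i = star (N₁ ^ i) * N₁ ^ i := fun i => by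
    rw [star_pow]; exact c11.mul_pow i
  have hAB : ∀ i, A ^ i * B = star (N₁ ^ i * N₂) * (N₁ ^ i * N₂) := by
    intro i
    rw [hA, star_mul, star_pow]
    have q1 : Commute (star N₁ ^ i * N₁ ^ i) (star N₂) :=
      (ss.pow_left i).mul_left (s12.pow_left i)
    simp only [B]
    rw [← mul_assoc, q1.eq]
    simp only [mul_assoc]
  have hABB : ∀ i, A ^ i * B ^ 2 = star (N₁ ^ i * N₂ * N₂) * (N₁ ^ i * N₂ * N₂) := by
    intro i
    rw [pow_two, ← mul_assoc, hAB, star_mul (N₁ ^ i * N₂) N₂]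
    have q1 : Commute (star (N₁ ^ i * N₂) * (N₁ ^ i * N₂)) (star N₂) := by
      rw [star_mul, star_pow]
      exact (((Commute.refl _).mul_left (ss.pow_left i))).mul_left ((s12.pow_left i).mul_left c22.symm)
    simp only [B]
    rw [← mul_assoc, q1.eq]
    simp only [mul_assoc]
  let S := (1 - A) ^ m * (1 - B)
  have cc : Commute ((1 - A) ^ m) (1 - B) :=
    ((Commute.one_left _).sub_left ((Commute.one_right _).sub_right cAB)).pow_left m
  have hS : star S * S = (1 - A) ^ (2 * m) * (1 - B) ^ 2 := by
    simp only [S]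
    rw [star_mul, star_pow, star_sub, star_sub, star_one, sA, sB, ← cc.eq, two_mul, pow_add, sq]
    rw [mul_assoc, ← mul_assoc (1 - B), ← cc.eq]
    simp only [mul_assoc]
  have hexp : (1 - A) ^ (2 * m) = ∑ i ∈ Finset.range (2 * m + 1),
      ((-1 : ℝ) ^ i * ((2 * m).choose i)) • A ^ i := by
    have : (1 - A) = -A + 1 := by abel
    rw [this, (Commute.one_right (-A)).add_pow]
    refine Finset.sum_congr rfl fun i _ => ?_
    rw [one_pow, mul_one, neg_pow, mul_smul, Nat.cast_smul_eq_nsmul, nsmul_eq_mul,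
      ← Nat.cast_comm, ← mul_assoc]
    rcases Nat.even_or_odd i with h' | h' <;> simp [h'.neg_one_pow]
  have hpos : 0 ≤ φ (star S * S) := by rw [hφ]; positivity
  rw [hS, hexp, Finset.sum_mul, map_sum] at hpos
  refine hpos.trans_eq (Finset.sum_congr rfl fun i _ => ?_)
  have : (1 - B) ^ 2 = 1 - (2 : ℝ) • B + B ^ 2 := by
    rw [two_smul]; noncomm_ring
  rw [smul_mul_assoc, map_smul, this, mul_add, mul_sub, mul_one, mul_smul_comm, hABB, hAB, hA,
    map_add, map_sub, map_smul, hφ, hφ, hφ]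
  rfl

lemma norm_shift (g : ℕ × ℕ → ℝ) (hg : ∀ k, 0 < g k) (α β : ℕ × ℕ → ℝ)
    (hα : ∀ k, g (k.1 + 1, k.2) = α k * g k) (hβ : ∀ k, g (k.1, k.2 + 1) = β k * g k)
    (h0 : g (0, 0) = 1)
    (T₁ T₂ : ℓ2 →L[ℂ] ℓ2)
    (hT₁ : ∀ k : ℕ × ℕ, T₁ (e k) = ((α k : ℂ)) • e (k.1 + 1, k.2))
    (hT₂ : ∀ k : ℕ × ℕ, T₂ (e k) = ((β k : ℂ)) • e (k.1, k.2 + 1))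
    {K : Type} [NormedAddCommGroup K] [InnerProductSpace ℂ K]
    (N₁ N₂ : K →L[ℂ] K) (V : ℓ2 →ₗᵢ[ℂ] K)
    (hV1 : ∀ x, N₁ (V x) = V (T₁ x)) (hV2 : ∀ x, N₂ (V x) = V (T₂ x)) (i j : ℕ) :
    (N₁ ^ i) ((N₂ ^ j) (V (e (0, 0)))) = (g (i, j) : ℂ) • V (e (i, j)) ∧ ‖V (e (i, j))‖ = 1 := by
  constructor
  · induction i with
    | zero =>
      induction j with
      | zero => simp [h0]
      | succ j ih =>
        have := hβ (0, j)
        simp only [pow_zero, one_apply_eq_self] at ih ⊢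
        rw [pow_succ', mul_apply_eq_comp, ih, map_smul, hV2, hT₂, map_smul, smul_smul,
          this]
        push_cast
        rw [mul_comm]
    | succ i ih =>
      have := hα (i, j)
      rw [pow_succ', mul_apply_eq_comp, ih, map_smul, hV1, hT₁, map_smul, smul_smul,
        this]
      push_cast
      rw [mul_comm]
  · rw [LinearIsometry.norm_map, e, lp.norm_single (by norm_num)]
    simp

lemma forward_ineq (a y : ℝ) (ha : 0 < a) (hy : 0 < y)
    (T₁ T₂ : ℓ2 →L[ℂ] ℓ2)
    (hT₁ : ∀ k : ℕ × ℕ, T₁ (e k) = ((alphaF a y k : ℂ)) • e (k.1 + 1, k.2))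
    (hT₂ : ∀ k : ℕ × ℕ, T₂ (e k) = ((betaF a y k : ℂ)) • e (k.1, k.2 + 1))
    (h : SubnormalPair T₁ T₂) (m : ℕ) (hm : m ≠ 0) :
    0 ≤ (1 - y ^ 2 * (2 - a ^ 2)) + y ^ 2 / 2 * (1 / (((2 * m : ℕ) : ℝ) + 1)) := by
  obtain ⟨K, _, _, _, N₁, N₂, V, h12, h1, h2, hV1, hV2⟩ := h
  have key := alt_sum_nonneg N₁ N₂ h12 h1 h2 (V (e (0, 0))) m
  have hn : ∀ i j, ‖(N₁ ^ i) ((N₂ ^ j) (V (e (0, 0))))‖ ^ 2 = gF a y (i, j) ^ 2 := by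
    intro i j
    obtain ⟨q1, q2⟩ := norm_shift (gF a y) (gF_pos ha hy) _ _ (gF_alpha a y) (gF_beta hy)
      (by simp [gF]) T₁ T₂ hT₁ hT₂ N₁ N₂ V hV1 hV2 i j
    rw [q1, norm_smul, q2]
    simp
  have hterm : ∀ i ∈ Finset.range (2 * m + 1), (-1 : ℝ) ^ i * ((2 * m).choose i) *
      (‖(N₁ ^ i) (V (e (0, 0)))‖ ^ 2 - 2 * ‖(N₁ ^ i) (N₂ (V (e (0, 0))))‖ ^ 2
        + ‖(N₁ ^ i) (N₂ (N₂ (V (e (0, 0)))))‖ ^ 2) =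
      (if i = 0 then 1 - y ^ 2 * (2 - a ^ 2) else 0)
      + y ^ 2 * (1 / 2 - a ^ 2) * ((-1 : ℝ) ^ i * ((2 * m).choose i))
      + y ^ 2 / 2 * ((-1 : ℝ) ^ i * ((2 * m).choose i) * (1 / ((i : ℝ) + 1))) := by
    intro i _
    have e0 := hn i 0
    have e1 := hn i 1
    have e2 := hn i 2
    simp only [pow_zero, one_apply_eq_self] at e0
    simp only [pow_one] at e1
    simp only [pow_two N₂, mul_apply_eq_comp] at e2
    rw [e0, e1, e2]
    cases i with
    | zero => simp [gF]; ring
    | succ i =>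
      rw [gF_zero_sq]
      simp [gF]
      field_simp
      ring
  rw [Finset.sum_congr rfl hterm, Finset.sum_add_distrib, Finset.sum_add_distrib,
    ← Finset.mul_sum, ← Finset.mul_sum, alt_sum_inv, alt_sum_choose (by omega)] at key
  simpa using key

/-- For `0 < a ≤ 1/√2` and `0 < y ≤ 1`, the 2-variable weighted shift of Figure 2 is
subnormal iff `y ≤ √(1/(2−a²))`. -/
theorem figure2_subnormal_iff (a y : ℝ) (ha : 0 < a) (ha' : a ≤ 1 / Real.sqrt 2)
    (hy : 0 < y) (hy' : y ≤ 1)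
    (T₁ T₂ : ℓ2 →L[ℂ] ℓ2)
    (hT₁ : ∀ k : ℕ × ℕ, T₁ (e k) = ((alphaF a y k : ℂ)) • e (k.1 + 1, k.2))
    (hT₂ : ∀ k : ℕ × ℕ, T₂ (e k) = ((betaF a y k : ℂ)) • e (k.1, k.2 + 1))
    (hcomm : T₁ ∘L T₂ = T₂ ∘L T₁) :
    SubnormalPair T₁ T₂ ↔ y ≤ Real.sqrt (1 / (2 - a ^ 2)) := by
  have ha2 : a ^ 2 ≤ 1 / 2 := by
    have := pow_le_pow_left₀ ha.le ha' 2
    rwa [div_pow, Real.sq_sqrt (by norm_num), one_pow] at this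
  have hd : 0 < 2 - a ^ 2 := by linarith
  have hiff : y ≤ Real.sqrt (1 / (2 - a ^ 2)) ↔ 0 ≤ 1 - y ^ 2 * (2 - a ^ 2) := by
    rw [Real.le_sqrt' hy, le_div_iff₀ hd, sub_nonneg]
  rw [hiff]
  constructor
  · intro h
    have hlim : Filter.Tendsto (fun m : ℕ => (1 - y ^ 2 * (2 - a ^ 2)) +
        y ^ 2 / 2 * (1 / (((2 * m : ℕ) : ℝ) + 1))) Filter.atTop
        (nhds ((1 - y ^ 2 * (2 - a ^ 2)) + y ^ 2 / 2 * 0)) := by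
      refine Filter.Tendsto.const_add _ (Filter.Tendsto.const_mul _ ?_)
      exact (tendsto_one_div_add_atTop_nhds_zero_nat (𝕜 := ℝ)).comp
        (Filter.tendsto_id.const_mul_atTop' (by norm_num : 0 < 2))
    rw [mul_zero, add_zero] at hlim
    refine ge_of_tendsto hlim ?_
    filter_upwards [Filter.eventually_ne_atTop 0] with m hm
    exact forward_ineq a y ha hy T₁ T₂ hT₁ hT₂ h m hm
  · intro hc
    exact subnormal_of_moments (gF a y) (gF_pos ha hy) _ _ (gF_alpha a y) (gF_beta hy)
      (nuM a y) (nuM_moment a y ha2 hc) T₁ T₂ hT₁ hT₂
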